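/- (Swap lemma underlying Theorem 1) Let z, u, w ∈ ℂ with z ≠ 0, u ≠ w, and |u| = |w|. If ang(z, u) ≤ ang(z, w), then |z + u − w| > |z|. In words: replacing the contribution w by a different vector u of the same amplitude whose angle with z is not larger strictly increases the amplitude of the sum. -/

import Mathlib

/-- The angle in `[0,π]` between two nonzero complex numbers regarded as plane vectors:
`ang a b = arccos (Re (a * conj b) / (|a| * |b|))`. -/
noncomputable def ang (a b : ℂ) : ℝ :=
  Real.arccos ((a * (starRingEnd ℂ) b).re / (‖a‖ * ‖b‖))

open InnerProductGeometry
open scoped RealInnerProductSpace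

section InnerProductSpace

variable {V : Type*} [NormedAddCommGroup V] [InnerProductSpace ℝ V]

theorem norm_lt_norm_add_of_inner_nonneg {x y : V} (hxy : 0 ≤ ⟪x, y⟫) (hy : y ≠ 0) :
    ‖x‖ < ‖x + y‖ := by
  have hy_pos : 0 < ‖y‖ ^ 2 := pow_pos (norm_pos_iff.mpr hy) 2
  refine lt_of_pow_lt_pow_left₀ 2 (norm_nonneg _) ?_
  calc
    ‖x‖ ^ 2 < ‖x‖ ^ 2 + 2 * ⟪x, y⟫ + ‖y‖ ^ 2 := by linarith
    _ = ‖x + y‖ ^ 2 := (norm_add_sq_real x y).symm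

theorem inner_le_inner_of_angle_le_angle {x y y' : V} (hnorm : ‖y‖ = ‖y'‖)
    (hangle : angle x y ≤ angle x y') : ⟪x, y'⟫ ≤ ⟪x, y⟫ := by
  have hcos : Real.cos (angle x y') ≤ Real.cos (angle x y) :=
    Real.cos_le_cos_of_nonneg_of_le_pi (angle_nonneg x y) (angle_le_pi x y') hangle
  calc
    ⟪x, y'⟫ = Real.cos (angle x y') * (‖x‖ * ‖y'‖) := (cos_angle_mul_norm_mul_norm x y').symm
    _ ≤ Real.cos (angle x y) * (‖x‖ * ‖y‖) := by rw [hnorm]; gcongr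
    _ = ⟪x, y⟫ := cos_angle_mul_norm_mul_norm x y

theorem stmt_9_general {z u w : V} (huw : u ≠ w) (hnorm : ‖u‖ = ‖w‖)
    (hangle : angle z u ≤ angle z w) : ‖z‖ < ‖z + u - w‖ := by
  have hinner : 0 ≤ ⟪z, u - w⟫ := by
    rw [inner_sub_right, sub_nonneg]
    exact inner_le_inner_of_angle_le_angle hnorm hangle
  rw [add_sub_assoc]
  exact norm_lt_norm_add_of_inner_nonneg hinner (sub_ne_zero.mpr huw)

end InnerProductSpace

theorem ang_eq_angle (a b : ℂ) : ang a b = angle a b := by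
  rw [ang, angle, real_inner_comm, Complex.inner]

/-- Swap lemma underlying Theorem 1: replacing the contribution `w` by a different vector `u`
of the same amplitude whose angle with `z` is not larger strictly increases the amplitude
of the sum: `|z + u - w| > |z|`. -/
theorem stmt_9 (z u w : ℂ) (hz : z ≠ 0) (huw : u ≠ w)
    (habs : ‖u‖ = ‖w‖)
    (hang : ang z u ≤ ang z w) :
    ‖z‖ < ‖z + u - w‖ := by
  rw [ang_eq_angle, ang_eq_angle] at hang
  exact stmt_9_general huw habs hang
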